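/- Let d be an odd positive integer and let 𝒟 = {D₁, D₂} be nontrivial partitions of d (neither equal to [d] nor to [1,…,1]) with ν(D₁) + ν(D₂) = d − 1 and ν(D₁) ≥ ν(D₂). If D₁ contains parts x and y with x > max{y, 2} and gcd(y, d) = 1, then there exist permutations α ∈ D₁ and β ∈ D₂ of the d-element set and a permutation ω with ω² = αβ such that the group ⟨α, β, ω⟩ is a primitive (in particular transitive) permutation group. -/

import Mathlib

/-- The cycle type of a permutation, including fixed points as parts equal to `1`. -/
def fullCycleType {Ω : Type*} [Fintype Ω] [DecidableEq Ω] (σ : Equiv.Perm Ω) : Multiset ℕ :=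
  σ.cycleType + Multiset.replicate (Fintype.card Ω - σ.support.card) 1

/-- A multiset of positive integers summing to `d`, i.e. a partition of `d`. -/
def IsPartitionOf (d : ℕ) (D : Multiset ℕ) : Prop :=
  (∀ x ∈ D, 0 < x) ∧ D.sum = d

/-- The defect `ν(D) = Σⱼ (dⱼ − 1)` of a partition. -/
def nu (D : Multiset ℕ) : ℕ := (D.map (· - 1)).sum

/-- The partition `[2,…,2,1]` of an odd number `d`, with `(d−1)/2` parts equal to `2`. -/
def twosAndOne (d : ℕ) : Multiset ℕ := Multiset.replicate ((d - 1) / 2) 2 + {1}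

/-- A subgroup of the symmetric group on `Ω` is transitive. -/
def SubgroupTransitive {Ω : Type*} (G : Subgroup (Equiv.Perm Ω)) : Prop :=
  ∀ x y : Ω, ∃ g ∈ G, g x = y

/-- `Λ` is a block for the subgroup `G` of the symmetric group on `Ω`. -/
def IsBlockOf {Ω : Type*} (G : Subgroup (Equiv.Perm Ω)) (Λ : Set Ω) : Prop :=
  Λ.Nonempty ∧ ∀ g ∈ G, (⇑g '' Λ = Λ ∨ Disjoint (⇑g '' Λ) Λ)

/-- A block is trivial if it is a singleton or the whole set. -/
def TrivialBlock {Ω : Type*} (Λ : Set Ω) : Prop :=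
  (∃ x, Λ = {x}) ∨ Λ = Set.univ

/-- A subgroup of the symmetric group is primitive: transitive with only trivial blocks. -/
def SubgroupPrimitive {Ω : Type*} (G : Subgroup (Equiv.Perm Ω)) : Prop :=
  SubgroupTransitive G ∧ ∀ Λ : Set Ω, IsBlockOf G Λ → TrivialBlock Λ

/-- A subgroup of the symmetric group is imprimitive: transitive but not primitive. -/
def SubgroupImprimitive {Ω : Type*} (G : Subgroup (Equiv.Perm Ω)) : Prop :=
  SubgroupTransitive G ∧ ¬ SubgroupPrimitive G

/-- The orbit of `x` under a subgroup `G` of the symmetric group on `Ω`. -/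
def orbSet {Ω : Type*} (G : Subgroup (Equiv.Perm Ω)) (x : Ω) : Set Ω :=
  {y | ∃ g ∈ G, g x = y}

/-- The number of orbits of a subgroup `G` of the symmetric group on `Ω`. -/
noncomputable def numOrbits {Ω : Type*} (G : Subgroup (Equiv.Perm Ω)) : ℕ :=
  Nat.card (Set.range (orbSet G))


section helpers


open Equiv Equiv.Perm Finset

/-- The cycle of `σ` through `x`, as a finset. -/
def cls {Ω : Type*} [Fintype Ω] [DecidableEq Ω] (σ : Equiv.Perm Ω) (x : Ω) : Finset Ω :=
  Finset.univ.filter (fun y => σ.SameCycle x y)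

/-- The length of the cycle of `σ` through `x`. -/
def len {Ω : Type*} [Fintype Ω] [DecidableEq Ω] (σ : Equiv.Perm Ω) (x : Ω) : ℕ := (cls σ x).card

section core
variable {Ω : Type*} [Fintype Ω] [DecidableEq Ω]

lemma mem_cls {σ : Equiv.Perm Ω} {x y : Ω} : y ∈ cls σ x ↔ σ.SameCycle x y := by
  simp [cls]

lemma len_pos (σ : Equiv.Perm Ω) (x : Ω) : 0 < len σ x :=
  Finset.card_pos.2 ⟨x, mem_cls.2 (SameCycle.refl _ _)⟩

lemma cls_eq {σ : Equiv.Perm Ω} {x y : Ω} (h : σ.SameCycle x y) : cls σ x = cls σ y := by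
  ext z
  rw [mem_cls, mem_cls]
  exact ⟨fun h' => h.symm.trans h', fun h' => h.trans h'⟩

lemma len_eq {σ : Equiv.Perm Ω} {x y : Ω} (h : σ.SameCycle x y) : len σ x = len σ y := by
  rw [len, len, cls_eq h]

lemma cls_fixed {σ : Equiv.Perm Ω} {x : Ω} (h : σ x = x) : cls σ x = {x} := by
  ext z
  rw [mem_cls, Finset.mem_singleton]
  constructor
  · intro h'
    exact (h'.eq_of_left h).symm
  · rintro rfl
    exact SameCycle.refl _ _

lemma len_fixed {σ : Equiv.Perm Ω} {x : Ω} (h : σ x = x) : len σ x = 1 := by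
  rw [len, cls_fixed h, Finset.card_singleton]

lemma len_eq_one_iff {σ : Equiv.Perm Ω} {x : Ω} : len σ x = 1 ↔ σ x = x := by
  constructor
  · intro h
    obtain ⟨z, hz⟩ := Finset.card_eq_one.1 h
    have h1 : x ∈ cls σ x := mem_cls.2 (SameCycle.refl _ _)
    have h2 : σ x ∈ cls σ x := mem_cls.2 (sameCycle_apply_right.2 (SameCycle.refl _ _))
    rw [hz, Finset.mem_singleton] at h1 h2
    rw [h2, h1]
  · exact len_fixed

lemma len_eq_support {σ : Equiv.Perm Ω} {x : Ω} (h : σ x ≠ x) :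
    len σ x = (σ.cycleOf x).support.card := by
  unfold len
  congr 1
  ext y
  rw [mem_cls, mem_support_cycleOf_iff' h]

lemma zero_notMem_full (σ : Equiv.Perm Ω) : 0 ∉ fullCycleType σ := by
  intro h
  rcases Multiset.mem_add.1 h with h | h
  · have := two_le_of_mem_cycleType h
    omega
  · have := Multiset.eq_of_mem_replicate h
    omega

lemma count_full (σ : Equiv.Perm Ω) (i : ℕ) :
    i * (fullCycleType σ).count i = (Finset.univ.filter (fun x => len σ x = i)).card := by
  rcases Nat.lt_trichotomy i 1 with hi | rfl | hi
  · have : i = 0 := by omega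
    subst this
    symm
    simp only [zero_mul, Finset.card_eq_zero]
    ext x
    have := len_pos σ x
    simp
    omega
  · unfold fullCycleType
    rw [Multiset.count_add, Multiset.count_replicate_self, Multiset.count_eq_zero_of_notMem, zero_add,
      one_mul]
    · rw [← Finset.card_compl]
      congr 1
      ext x
      simp [len_eq_one_iff]
    · intro h
      have := two_le_of_mem_cycleType h
      omega
  · unfold fullCycleType
    rw [Multiset.count_add, Multiset.count_replicate, if_neg (by omega), add_zero,
      CycleType.count_def]
    have : (Finset.univ.filter (fun x => len σ x = i)) =
        (σ.cycleFactorsFinset.filter (fun c => c.support.card = i)).biUnion (fun c => c.support) := by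
      ext x
      simp only [Finset.mem_filter, Finset.mem_univ, true_and, Finset.mem_biUnion]
      constructor
      · intro h
        have hx : σ x ≠ x := fun h' => by
          have := len_fixed h'
          omega
        refine ⟨σ.cycleOf x, ⟨cycleOf_mem_cycleFactorsFinset_iff.2 (mem_support.2 hx), ?_⟩, ?_⟩
        · rw [← len_eq_support hx, h]
        · rw [mem_support_cycleOf_iff' hx]
      · rintro ⟨c, ⟨hc, hci⟩, hx⟩
        have h2 := cycle_is_cycleOf hx hc
        have hx' : σ x ≠ x := mem_support.1 (mem_cycleFactorsFinset_support_le hc hx)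
        rw [len_eq_support hx', ← h2, hci]
    rw [this, Finset.card_biUnion]
    · rw [Finset.sum_const_nat (m := i)]
      · rw [mul_comm]
        congr 1
        rw [← Fintype.card_coe]
        apply Fintype.card_congr
        exact {
          toFun := fun c => ⟨c.1.1, Finset.mem_filter.2 ⟨c.1.2, c.2⟩⟩
          invFun := fun c => ⟨⟨c.1, (Finset.mem_filter.1 c.2).1⟩, (Finset.mem_filter.1 c.2).2⟩
          left_inv := fun c => rfl
          right_inv := fun c => rfl }
      · intro c hc
        exact (Finset.mem_filter.1 hc).2
    · intro c hc c' hc' hne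
      have := σ.cycleFactorsFinset_pairwise_disjoint (Finset.mem_filter.1 hc).1
        (Finset.mem_filter.1 hc').1 hne
      exact this.disjoint_support

lemma len_minimalPeriod (σ : Equiv.Perm Ω) (x : Ω) : len σ x = Function.minimalPeriod σ x := by
  classical
  have := MulAction.minimalPeriod_eq_card (a := σ) (b := x)
  have h2 : ((σ • ·) : Ω → Ω) = σ := rfl
  rw [h2] at this
  rw [this, ← Set.toFinset_card]
  unfold len
  congr 1
  ext y
  simp only [mem_cls, Set.mem_toFinset, MulAction.mem_orbit_iff]
  constructor
  · rintro ⟨k, hk⟩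
    exact ⟨⟨σ ^ k, k, rfl⟩, hk⟩
  · rintro ⟨⟨_, k, rfl⟩, hk⟩
    exact ⟨k, hk⟩

lemma len_pow_two (σ : Equiv.Perm Ω) (x : Ω) : len (σ ^ 2) x = len σ x / Nat.gcd (len σ x) 2 := by
  rw [len_minimalPeriod, len_minimalPeriod, Equiv.Perm.coe_pow,
    Function.minimalPeriod_iterate_eq_div_gcd (by norm_num)]

lemma full_conj (σ τ : Equiv.Perm Ω) : fullCycleType (τ * σ * τ⁻¹) = fullCycleType σ := by
  unfold fullCycleType
  rw [cycleType_conj, card_support_conj]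

/-- merging two cycles -/
lemma sameCycle_swap {σ : Equiv.Perm Ω} {s t : Ω} (h : ¬ σ.SameCycle s t) :
    (swap s t * σ).SameCycle s t := by
  by_contra hc
  set σ' := swap s t * σ with hσ'
  let C : Set Ω := {x | σ'.SameCycle s x ∧ σ.SameCycle s x}
  have key : ∀ x ∈ C, σ x ∈ C ∧ σ x ≠ s := by
    rintro x ⟨h1, h2⟩
    have h3 : σ.SameCycle s (σ x) := sameCycle_apply_right.2 h2
    have h4 : σ'.SameCycle s (σ' x) := sameCycle_apply_right.2 h1
    have hnt : σ x ≠ t := fun e => h (e ▸ h3)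
    have hns : σ x ≠ s := by
      intro e
      have : σ' x = t := by simp [hσ', e]
      exact hc (this ▸ h4)
    have : σ' x = σ x := by simp [hσ', swap_apply_of_ne_of_ne hns hnt]
    exact ⟨⟨this ▸ h4, h3⟩, hns⟩
  have hpow : ∀ k : ℕ, (σ ^ (k + 1)) s ∈ C ∧ (σ ^ (k+1)) s ≠ s := by
    intro k
    induction k with
    | zero => simpa using key s ⟨SameCycle.refl _ _, SameCycle.refl _ _⟩
    | succ k ih =>
      rw [pow_succ']
      exact key _ ih.1
  have h0 := orderOf_pos σ
  apply (hpow (orderOf σ - 1)).2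
  rw [Nat.sub_add_cancel h0, pow_orderOf_eq_one]
  rfl

lemma sameCycle_of_step {σ : Equiv.Perm Ω} (r : Ω → Ω → Prop) (hr : Equivalence r)
    (hs : ∀ x, r x (σ x)) {x y : Ω} (h : σ.SameCycle x y) : r x y := by
  obtain ⟨k, rfl⟩ := h.exists_nat_pow_eq
  induction k with
  | zero => exact hr.refl x
  | succ k ih =>
    rw [pow_succ']
    exact hr.trans (ih (sameCycle_pow_right.2 (SameCycle.refl _ _))) (hs _)

lemma sameCycle_merge_of {σ : Equiv.Perm Ω} {s t : Ω} (h : ¬ σ.SameCycle s t) {x y : Ω}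
    (hxy : σ.SameCycle x y) : (swap s t * σ).SameCycle x y := by
  have hst := sameCycle_swap h
  refine sameCycle_of_step _ (SameCycle.equivalence _) (fun x => ?_) hxy
  have h1 : (swap s t * σ).SameCycle x ((swap s t * σ) x) :=
    sameCycle_apply_right.2 (SameCycle.refl _ _)
  by_cases hs : σ x = s
  · have : (swap s t * σ) x = t := by simp [hs]
    rw [this] at h1
    rw [hs]
    exact h1.trans hst.symm
  by_cases ht : σ x = t
  · have : (swap s t * σ) x = s := by simp [ht]
    rw [this] at h1
    rw [ht]
    exact h1.trans hst
  · have : (swap s t * σ) x = σ x := by simp [swap_apply_of_ne_of_ne hs ht]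
    rwa [this] at h1

lemma sameCycle_merge_iff {σ : Equiv.Perm Ω} {s t : Ω} (h : ¬ σ.SameCycle s t) {x y : Ω} :
    (swap s t * σ).SameCycle x y ↔ σ.SameCycle x y ∨
      ((σ.SameCycle s x ∨ σ.SameCycle t x) ∧ (σ.SameCycle s y ∨ σ.SameCycle t y)) := by
  have hst := sameCycle_swap h
  constructor
  · intro hxy
    refine sameCycle_of_step (σ := swap s t * σ) (fun x y => σ.SameCycle x y ∨
      ((σ.SameCycle s x ∨ σ.SameCycle t x) ∧ (σ.SameCycle s y ∨ σ.SameCycle t y))) ?_ ?_ hxy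
    · refine ⟨fun x => Or.inl (SameCycle.refl _ _), ?_, ?_⟩
      · rintro x y (h | ⟨h1, h2⟩)
        · exact Or.inl h.symm
        · exact Or.inr ⟨h2, h1⟩
      · rintro x y z (h | ⟨h1, h2⟩) (h' | ⟨h1', h2'⟩)
        · exact Or.inl (h.trans h')
        · exact Or.inr ⟨h1'.imp (fun a => a.trans h.symm) (fun a => a.trans h.symm), h2'⟩
        · exact Or.inr ⟨h1, h2.imp (fun a => a.trans h') (fun a => a.trans h')⟩
        · exact Or.inr ⟨h1, h2'⟩
    · intro x
      have h1 : σ.SameCycle (σ x) x := sameCycle_apply_left.2 (SameCycle.refl _ _)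
      by_cases hs : σ x = s
      · have : (swap s t * σ) x = t := by simp [hs]
        rw [this]
        exact Or.inr ⟨Or.inl (hs ▸ h1), Or.inr (SameCycle.refl _ _)⟩
      by_cases ht : σ x = t
      · have : (swap s t * σ) x = s := by simp [ht]
        rw [this]
        exact Or.inr ⟨Or.inr (ht ▸ h1), Or.inl (SameCycle.refl _ _)⟩
      · have : (swap s t * σ) x = σ x := by simp [swap_apply_of_ne_of_ne hs ht]
        rw [this]
        exact Or.inl h1.symm
  · rintro (h' | ⟨h1, h2⟩)
    · exact sameCycle_merge_of h h'
    · have h3 : (swap s t * σ).SameCycle s x := by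
        rcases h1 with h1 | h1
        · exact sameCycle_merge_of h h1
        · exact hst.trans (sameCycle_merge_of h h1)
      have h4 : (swap s t * σ).SameCycle s y := by
        rcases h2 with h1 | h1
        · exact sameCycle_merge_of h h1
        · exact hst.trans (sameCycle_merge_of h h1)
      exact h3.symm.trans h4

lemma cls_disj {σ : Equiv.Perm Ω} {s t : Ω} (h : ¬ σ.SameCycle s t) :
    Disjoint (cls σ s) (cls σ t) := by
  rw [Finset.disjoint_left]
  intro x h1 h2
  exact h ((mem_cls.1 h1).trans (mem_cls.1 h2).symm)

lemma len_merge {σ : Equiv.Perm Ω} {s t x : Ω} (h : ¬ σ.SameCycle s t)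
    (hx : σ.SameCycle s x ∨ σ.SameCycle t x) :
    len (swap s t * σ) x = len σ s + len σ t := by
  unfold len
  rw [← Finset.card_union_of_disjoint (cls_disj h)]
  congr 1
  ext y
  rw [mem_cls, sameCycle_merge_iff h, Finset.mem_union, mem_cls, mem_cls]
  constructor
  · rintro (h' | h')
    · exact hx.imp (fun a => a.trans h') (fun a => a.trans h')
    · exact h'.2
  · intro h'
    exact Or.inr ⟨hx, h'⟩

lemma len_merge_of_not {σ : Equiv.Perm Ω} {s t x : Ω} (h : ¬ σ.SameCycle s t)
    (hx : ¬ σ.SameCycle s x) (hx' : ¬ σ.SameCycle t x) :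
    len (swap s t * σ) x = len σ x := by
  unfold len
  congr 1
  ext y
  rw [mem_cls, sameCycle_merge_iff h, mem_cls]
  tauto

lemma full_ext {A B : Multiset ℕ} (hA : 0 ∉ A) (hB : 0 ∉ B)
    (h : ∀ i, i * A.count i = i * B.count i) : A = B := by
  ext i
  rcases Nat.eq_zero_or_pos i with rfl | hi
  · rw [Multiset.count_eq_zero_of_notMem hA, Multiset.count_eq_zero_of_notMem hB]
  · exact Nat.eq_of_mul_eq_mul_left hi (h i)

lemma full_merge {σ : Equiv.Perm Ω} {s t : Ω} (h : ¬ σ.SameCycle s t) :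
    len σ s ::ₘ len σ t ::ₘ fullCycleType (swap s t * σ) =
      (len σ s + len σ t) ::ₘ fullCycleType σ := by
  have p1 := len_pos σ s
  have p2 := len_pos σ t
  apply full_ext
  · simp only [Multiset.mem_cons, not_or]
    exact ⟨by omega, by omega, zero_notMem_full _⟩
  · simp only [Multiset.mem_cons, not_or]
    exact ⟨by omega, zero_notMem_full _⟩
  intro i
  have hsplit : ∀ τ : Equiv.Perm Ω, (Finset.univ.filter (fun x => len τ x = i)).card =
      ((cls σ s ∪ cls σ t)ᶜ.filter (fun x => len τ x = i)).card +
      (((cls σ s).filter (fun x => len τ x = i)).card +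
        ((cls σ t).filter (fun x => len τ x = i)).card) := by
    intro τ
    rw [← Finset.card_union_of_disjoint, ← Finset.filter_union,
      ← Finset.card_union_of_disjoint, ← Finset.filter_union]
    · congr 2
      rw [Finset.union_comm, Finset.union_compl]
    · exact Finset.disjoint_filter_filter disjoint_compl_left
    · exact Finset.disjoint_filter_filter (cls_disj h)
  have c1 := hsplit σ
  have c2 := hsplit (swap s t * σ)
  have e1 : (cls σ s ∪ cls σ t)ᶜ.filter (fun x => len (swap s t * σ) x = i) =
      (cls σ s ∪ cls σ t)ᶜ.filter (fun x => len σ x = i) := by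
    apply Finset.filter_congr
    intro x hx
    simp only [Finset.mem_compl, Finset.mem_union, mem_cls, not_or] at hx
    rw [len_merge_of_not h hx.1 hx.2]
  have hc : ∀ (τ : Equiv.Perm Ω) (S : Finset Ω) (a : ℕ), (∀ x ∈ S, len τ x = a) →
      (S.filter (fun x => len τ x = i)).card = if i = a then S.card else 0 := by
    intro τ S a hS
    split_ifs with hia
    · rw [Finset.filter_true_of_mem]
      intro x hx
      rw [hS x hx, hia]
    · rw [Finset.filter_false_of_mem, Finset.card_empty]
      intro x hx
      rw [hS x hx]
      omega
  rw [hc σ (cls σ s) (len σ s) (fun x hx => (len_eq (mem_cls.1 hx)).symm),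
    hc σ (cls σ t) (len σ t) (fun x hx => (len_eq (mem_cls.1 hx)).symm), ← count_full] at c1
  rw [hc _ (cls σ s) (len σ s + len σ t) (fun x hx => len_merge h (Or.inl (mem_cls.1 hx))),
    hc _ (cls σ t) (len σ s + len σ t) (fun x hx => len_merge h (Or.inr (mem_cls.1 hx))),
    ← count_full, e1] at c2
  simp only [Multiset.count_cons, mul_add]
  rw [c1, c2]
  change _ + ((if i = len σ s + len σ t then len σ s else 0) +
    (if i = len σ s + len σ t then len σ t else 0)) + _ + _ =
    _ + ((if i = len σ s then len σ s else 0) +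
    (if i = len σ t then len σ t else 0)) + _
  have g : ∀ a : ℕ, i * (if i = a then 1 else 0) = if i = a then a else 0 := by
    intro a
    split_ifs with hh
    · omega
    · omega
  rw [g, g, g]
  split_ifs <;> omega

end core
set_option linter.unusedSectionVars false

section states
variable {Ω : Type*} [Fintype Ω] [DecidableEq Ω]

lemma not_same_of_fixed {σ : Equiv.Perm Ω} {s t : Ω} (ht : σ t = t) (hne : t ≠ s) :
    ¬ σ.SameCycle t s := fun h => hne (h.eq_of_left ht)

lemma full_insL {σ : Equiv.Perm Ω} {s t : Ω} (ht : σ t = t) (hne : t ≠ s) {A : Multiset ℕ} {a k : ℕ}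
    (hA : fullCycleType σ = a ::ₘ A + Multiset.replicate (k + 1) 1) (ha : len σ s = a) :
    fullCycleType (swap t s * σ) = (a + 1) ::ₘ A + Multiset.replicate k 1 := by
  have h := full_merge (not_same_of_fixed ht hne)
  rw [len_fixed ht, ha, hA] at h
  apply (Multiset.cons_inj_right 1).1
  apply (Multiset.cons_inj_right a).1
  rw [Multiset.cons_swap, h, Multiset.replicate_succ]
  rw [add_comm 1 a]
  simp only [Multiset.cons_add, Multiset.add_cons]
  rw [Multiset.cons_swap a, Multiset.cons_swap (a+1) 1, Multiset.cons_swap (a+1) a]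

lemma len_insL {σ : Equiv.Perm Ω} {s t x : Ω} (ht : σ t = t) (hne : t ≠ s)
    (hx : σ.SameCycle s x ∨ x = t) : len (swap t s * σ) x = len σ s + 1 := by
  rw [len_merge (not_same_of_fixed ht hne), len_fixed ht, add_comm]
  rcases hx with h | rfl
  · exact Or.inr h
  · exact Or.inl (SameCycle.refl _ _)

lemma insR_eq {σ : Equiv.Perm Ω} {s t : Ω} (ht : σ t = t) :
    σ * swap t s = swap t (σ s) * σ := by
  rw [mul_swap_eq_swap_mul, ht]

lemma insR_ne {σ : Equiv.Perm Ω} {s t : Ω} (ht : σ t = t) (hne : t ≠ s) : t ≠ σ s := by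
  intro h
  apply hne
  apply σ.injective
  rw [ht, ← h]

lemma len_apply (σ : Equiv.Perm Ω) (s : Ω) : len σ (σ s) = len σ s :=
  len_eq (sameCycle_apply_left.2 (SameCycle.refl _ _))

lemma full_insR {σ : Equiv.Perm Ω} {s t : Ω} (ht : σ t = t) (hne : t ≠ s) {A : Multiset ℕ} {a k : ℕ}
    (hA : fullCycleType σ = a ::ₘ A + Multiset.replicate (k + 1) 1) (ha : len σ s = a) :
    fullCycleType (σ * swap t s) = (a + 1) ::ₘ A + Multiset.replicate k 1 := by
  rw [insR_eq ht]
  exact full_insL ht (insR_ne ht hne) hA (by rw [len_apply, ha])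

lemma len_insR {σ : Equiv.Perm Ω} {s t x : Ω} (ht : σ t = t) (hne : t ≠ s)
    (hx : σ.SameCycle s x ∨ x = t) : len (σ * swap t s) x = len σ s + 1 := by
  rw [insR_eq ht, len_insL ht (insR_ne ht hne), len_apply]
  rwa [sameCycle_apply_left]

lemma full_one_out {σ : Equiv.Perm Ω} {A : Multiset ℕ} {k : ℕ}
    (hA : fullCycleType σ = A + Multiset.replicate (k + 1) 1) :
    fullCycleType σ = 1 ::ₘ A + Multiset.replicate k 1 := by
  rw [hA, Multiset.replicate_succ]
  simp

/-- The pair `α, β` lives on `U` and is connected there. -/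
def Base (n : ℕ) (α β : Equiv.Perm Ω) (U : Finset Ω) : Prop :=
  U.card = n ∧ (∀ x, x ∉ U → α x = x) ∧ (∀ x, x ∉ U → β x = x) ∧
  ∀ f : Ω → Prop, (∀ x, f (α x) ↔ f x) → (∀ x, f (β x) ↔ f x) → ∀ x ∈ U, ∀ y ∈ U, (f x ↔ f y)

lemma inv_insL {σ : Equiv.Perm Ω} {s t : Ω} (ht : σ t = t) (hne : t ≠ s) {f : Ω → Prop}
    (h : ∀ x, f ((swap t s * σ) x) ↔ f x) : (∀ x, f (σ x) ↔ f x) ∧ (f t ↔ f s) := by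
  have h1 : f t ↔ f s := by
    have := h t
    simp [ht] at this
    exact this.symm
  refine ⟨fun x => ?_, h1⟩
  have h2 := h x
  by_cases hs : σ x = s
  · simp [hs] at h2
    rw [hs, ← h1, h2]
  by_cases hx : σ x = t
  · simp [hx] at h2
    rw [hx, h1, h2]
  · simpa [swap_apply_of_ne_of_ne hx hs] using h2

lemma inv_insR {σ : Equiv.Perm Ω} {s t : Ω} (ht : σ t = t) (hne : t ≠ s) {f : Ω → Prop}
    (h : ∀ x, f ((σ * swap t s) x) ↔ f x) : (∀ x, f (σ x) ↔ f x) ∧ (f t ↔ f s) := by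
  have h1 : f t ↔ f s := by
    have := h s
    simpa [ht] using this
  refine ⟨fun x => ?_, h1⟩
  by_cases hs : x = s
  · subst hs
    have := h t
    simp at this
    rw [this, h1]
  by_cases hx : x = t
  · subst hx
    rw [ht]
  · have h2 := h x
    simpa [swap_apply_of_ne_of_ne hx hs] using h2

lemma Base.build {n : ℕ} {α β α' β' : Equiv.Perm Ω} {U : Finset Ω} (h : Base n α β U) {s t : Ω}
    (ht : t ∉ U) (hs : s ∈ U)
    (hα : ∀ x, x ∉ insert t U → α' x = x) (hβ : ∀ x, x ∉ insert t U → β' x = x)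
    (hf : ∀ f : Ω → Prop, (∀ x, f (α' x) ↔ f x) → (∀ x, f (β' x) ↔ f x) →
      (∀ x, f (α x) ↔ f x) ∧ (∀ x, f (β x) ↔ f x) ∧ (f t ↔ f s)) :
    Base (n + 1) α' β' (insert t U) := by
  obtain ⟨h1, h2, h3, h4⟩ := h
  refine ⟨by rw [Finset.card_insert_of_notMem ht, h1], hα, hβ, ?_⟩
  intro f fα fβ
  obtain ⟨g1, g2, g3⟩ := hf f fα fβ
  have key : ∀ x ∈ insert t U, (f x ↔ f s) := by
    intro x hx
    rcases Finset.mem_insert.1 hx with rfl | hx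
    · exact g3
    · exact h4 f g1 g2 x hx s hs
  intro x hx y hy
  rw [key x hx, key y hy]

lemma fix_insL {σ : Equiv.Perm Ω} {U : Finset Ω} {s t : Ω} (h : ∀ x, x ∉ U → σ x = x)
    (hs : s ∈ U) : ∀ x, x ∉ insert t U → (swap t s * σ) x = x := by
  intro x hx
  simp only [Finset.mem_insert, not_or] at hx
  have : x ≠ s := fun e => hx.2 (e ▸ hs)
  simp [h x hx.2, swap_apply_of_ne_of_ne hx.1 this]

lemma fix_insR {σ : Equiv.Perm Ω} {U : Finset Ω} {s t : Ω} (h : ∀ x, x ∉ U → σ x = x)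
    (hs : s ∈ U) : ∀ x, x ∉ insert t U → (σ * swap t s) x = x := by
  intro x hx
  simp only [Finset.mem_insert, not_or] at hx
  have : x ≠ s := fun e => hx.2 (e ▸ hs)
  simp [h x hx.2, swap_apply_of_ne_of_ne hx.1 this]

lemma fix_ins {σ : Equiv.Perm Ω} {U : Finset Ω} {t : Ω} (h : ∀ x, x ∉ U → σ x = x) :
    ∀ x, x ∉ insert t U → σ x = x := by
  intro x hx
  simp only [Finset.mem_insert, not_or] at hx
  exact h x hx.2

lemma Base.W {n : ℕ} {α β : Equiv.Perm Ω} {U : Finset Ω} (h : Base n α β U) {s t : Ω}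
    (ht : t ∉ U) (hs : s ∈ U) : Base (n + 1) (swap t s * α) β (insert t U) := by
  refine h.build ht hs (fix_insL h.2.1 hs) (fix_ins h.2.2.1) ?_
  intro f f1 f2
  have := inv_insL (h.2.1 t ht) (fun e => ht (e ▸ hs)) f1
  exact ⟨this.1, f2, this.2⟩

lemma Base.B {n : ℕ} {α β : Equiv.Perm Ω} {U : Finset Ω} (h : Base n α β U) {s t : Ω}
    (ht : t ∉ U) (hs : s ∈ U) : Base (n + 1) α (β * swap t s) (insert t U) := by
  refine h.build ht hs (fix_ins h.2.1) (fix_insR h.2.2.1 hs) ?_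
  intro f f1 f2
  have := inv_insR (h.2.2.1 t ht) (fun e => ht (e ▸ hs)) f2
  exact ⟨f1, this.1, this.2⟩

lemma Base.WB {n : ℕ} {α β : Equiv.Perm Ω} {U : Finset Ω} (h : Base n α β U) {s r t : Ω}
    (ht : t ∉ U) (hs : s ∈ U) (hr : r ∈ U) :
    Base (n + 1) (swap t s * α) (β * swap t r) (insert t U) := by
  refine h.build ht hs (fix_insL h.2.1 hs) (fix_insR h.2.2.1 hr) ?_
  intro f f1 f2
  have := inv_insR (h.2.2.1 t ht) (fun e => ht (e ▸ hr)) f2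
  have h' := inv_insL (h.2.1 t ht) (fun e => ht (e ▸ hs)) f1
  exact ⟨h'.1, this.1, h'.2⟩

lemma Base.room {n : ℕ} {α β : Equiv.Perm Ω} {U : Finset Ω} (h : Base n α β U)
    (hn : n < Fintype.card Ω) :
    ∃ t k, t ∉ U ∧ α t = t ∧ β t = t ∧ (α * β) t = t ∧ Fintype.card Ω - n = k + 1 ∧
      Fintype.card Ω - (n + 1) = k := by
  have : U.card < Fintype.card Ω := by rw [h.1]; exact hn
  obtain ⟨t, ht⟩ : ∃ t, t ∉ U := by
    by_contra hc
    push Not at hc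
    rw [Finset.eq_univ_iff_forall.2 hc, Finset.card_univ] at this
    omega
  refine ⟨t, Fintype.card Ω - (n + 1), ht, h.2.1 t ht, h.2.2.1 t ht, ?_, by omega, rfl⟩
  simp [h.2.1 t ht, h.2.2.1 t ht]

variable (Ω) in
/-- rooted state: the root lies in an `α`-cycle of length `a`, a `β`-cycle of length `b`
and an `αβ`-cycle of length `e`; the remaining cycles have lengths `A`, `B`, `C`. -/
def St (n a : ℕ) (A : Multiset ℕ) (b : ℕ) (B : Multiset ℕ) (e : ℕ) (C : Multiset ℕ) : Prop :=
  ∃ (α β : Equiv.Perm Ω) (U : Finset Ω) (s : Ω), Base n α β U ∧ s ∈ U ∧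
    fullCycleType α = a ::ₘ A + Multiset.replicate (Fintype.card Ω - n) 1 ∧
    fullCycleType β = b ::ₘ B + Multiset.replicate (Fintype.card Ω - n) 1 ∧
    fullCycleType (α * β) = e ::ₘ C + Multiset.replicate (Fintype.card Ω - n) 1 ∧
    len α s = a ∧ len β s = b ∧ len (α * β) s = e

variable (Ω) in
/-- as `St`, without information on the `β`-cycle of the root -/
def StW (n a : ℕ) (A : Multiset ℕ) (B : Multiset ℕ) (e : ℕ) (C : Multiset ℕ) : Prop :=
  ∃ (α β : Equiv.Perm Ω) (U : Finset Ω) (s : Ω), Base n α β U ∧ s ∈ U ∧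
    fullCycleType α = a ::ₘ A + Multiset.replicate (Fintype.card Ω - n) 1 ∧
    fullCycleType β = B + Multiset.replicate (Fintype.card Ω - n) 1 ∧
    fullCycleType (α * β) = e ::ₘ C + Multiset.replicate (Fintype.card Ω - n) 1 ∧
    len α s = a ∧ len (α * β) s = e

variable (Ω) in
/-- state with a root `q` and its predecessor `p` -/
def StP (n a a' : ℕ) (A : Multiset ℕ) (b : ℕ) (B : Multiset ℕ) (e : ℕ) (C : Multiset ℕ) : Prop :=
  ∃ (α β : Equiv.Perm Ω) (U : Finset Ω) (p q : Ω), Base n α β U ∧ p ∈ U ∧ q ∈ U ∧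
    fullCycleType α = a ::ₘ a' ::ₘ A + Multiset.replicate (Fintype.card Ω - n) 1 ∧
    fullCycleType β = b ::ₘ B + Multiset.replicate (Fintype.card Ω - n) 1 ∧
    fullCycleType (α * β) = e ::ₘ C + Multiset.replicate (Fintype.card Ω - n) 1 ∧
    len α q = a ∧ len α p = a' ∧ len β q = b ∧ len (α * β) q = e ∧ (α * β) p = q ∧
    ¬ α.SameCycle q p

lemma full_one : fullCycleType (1 : Equiv.Perm Ω) = Multiset.replicate (Fintype.card Ω) 1 := by
  simp [fullCycleType]

lemma St.base (h : 0 < Fintype.card Ω) : St Ω 1 1 0 1 0 1 0 := by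
  obtain ⟨s⟩ := Fintype.card_pos_iff.1 h
  have e : fullCycleType (1 : Equiv.Perm Ω) =
      1 ::ₘ 0 + Multiset.replicate (Fintype.card Ω - 1) 1 := by
    rw [full_one]
    conv_lhs => rw [← Nat.sub_add_cancel h, Multiset.replicate_succ]
    simp
  refine ⟨1, 1, {s}, s, ⟨by simp, by simp, by simp, ?_⟩, by simp, e, e, by simpa using e,
    len_fixed rfl, len_fixed rfl, len_fixed rfl⟩
  intro f _ _ x hx y hy
  simp only [Finset.mem_singleton] at hx hy
  rw [hx, hy]

lemma St.Ws {n a b e : ℕ} {A B C : Multiset ℕ} (h : St Ω n a A b B e C)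
    (hn : n < Fintype.card Ω) : St Ω (n + 1) (a + 1) A b (1 ::ₘ B) (e + 1) C := by
  obtain ⟨α, β, U, s, h0, hs, h1, h2, h3, h4, h5, h6⟩ := h
  obtain ⟨t, k, ht, t1, t2, t3, hk, hk'⟩ := h0.room hn
  have hne : t ≠ s := fun e => ht (e ▸ hs)
  rw [hk] at h1 h2 h3
  refine ⟨swap t s * α, β, insert t U, s, h0.W ht hs, Finset.mem_insert_of_mem hs, ?_, ?_, ?_, ?_, ?_, ?_⟩
  · rw [hk']
    exact full_insL t1 hne h1 h4
  · rw [hk', Multiset.cons_swap]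
    exact full_one_out h2
  · rw [hk', mul_assoc]
    exact full_insL t3 hne h3 h6
  · rw [len_insL t1 hne (Or.inl (SameCycle.refl _ _)), h4]
  · exact h5
  · rw [mul_assoc, len_insL t3 hne (Or.inl (SameCycle.refl _ _)), h6]

lemma StW.Ws {n a e : ℕ} {A B C : Multiset ℕ} (h : StW Ω n a A B e C)
    (hn : n < Fintype.card Ω) : StW Ω (n + 1) (a + 1) A (1 ::ₘ B) (e + 1) C := by
  obtain ⟨α, β, U, s, h0, hs, h1, h2, h3, h4, h6⟩ := h
  obtain ⟨t, k, ht, t1, t2, t3, hk, hk'⟩ := h0.room hn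
  have hne : t ≠ s := fun e => ht (e ▸ hs)
  rw [hk] at h1 h2 h3
  refine ⟨swap t s * α, β, insert t U, s, h0.W ht hs, Finset.mem_insert_of_mem hs, ?_, ?_, ?_, ?_, ?_⟩
  · rw [hk']
    exact full_insL t1 hne h1 h4
  · rw [hk']
    exact full_one_out h2
  · rw [hk', mul_assoc]
    exact full_insL t3 hne h3 h6
  · rw [len_insL t1 hne (Or.inl (SameCycle.refl _ _)), h4]
  · rw [mul_assoc, len_insL t3 hne (Or.inl (SameCycle.refl _ _)), h6]

lemma St.Wt {n a b e : ℕ} {A B C : Multiset ℕ} (h : St Ω n a A b B e C)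
    (hn : n < Fintype.card Ω) : St Ω (n + 1) (a + 1) A 1 (b ::ₘ B) (e + 1) C := by
  obtain ⟨α, β, U, s, h0, hs, h1, h2, h3, h4, h5, h6⟩ := h
  obtain ⟨t, k, ht, t1, t2, t3, hk, hk'⟩ := h0.room hn
  have hne : t ≠ s := fun e => ht (e ▸ hs)
  rw [hk] at h1 h2 h3
  refine ⟨swap t s * α, β, insert t U, t, h0.W ht hs, Finset.mem_insert_self _ _, ?_, ?_, ?_, ?_, ?_, ?_⟩
  · rw [hk']
    exact full_insL t1 hne h1 h4
  · rw [hk']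
    exact full_one_out h2
  · rw [hk', mul_assoc]
    exact full_insL t3 hne h3 h6
  · rw [len_insL t1 hne (Or.inr rfl), h4]
  · exact len_fixed t2
  · rw [mul_assoc, len_insL t3 hne (Or.inr rfl), h6]

lemma St.Bs {n a b e : ℕ} {A B C : Multiset ℕ} (h : St Ω n a A b B e C)
    (hn : n < Fintype.card Ω) : St Ω (n + 1) a (1 ::ₘ A) (b + 1) B (e + 1) C := by
  obtain ⟨α, β, U, s, h0, hs, h1, h2, h3, h4, h5, h6⟩ := h
  obtain ⟨t, k, ht, t1, t2, t3, hk, hk'⟩ := h0.room hn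
  have hne : t ≠ s := fun e => ht (e ▸ hs)
  rw [hk] at h1 h2 h3
  refine ⟨α, β * swap t s, insert t U, s, h0.B ht hs, Finset.mem_insert_of_mem hs, ?_, ?_, ?_, ?_, ?_, ?_⟩
  · rw [hk', Multiset.cons_swap]
    exact full_one_out h1
  · rw [hk']
    exact full_insR t2 hne h2 h5
  · rw [hk', ← mul_assoc]
    exact full_insR t3 hne h3 h6
  · exact h4
  · rw [len_insR t2 hne (Or.inl (SameCycle.refl _ _)), h5]
  · rw [← mul_assoc, len_insR t3 hne (Or.inl (SameCycle.refl _ _)), h6]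

lemma St.Bt {n a b e : ℕ} {A B C : Multiset ℕ} (h : St Ω n a A b B e C)
    (hn : n < Fintype.card Ω) : St Ω (n + 1) 1 (a ::ₘ A) (b + 1) B (e + 1) C := by
  obtain ⟨α, β, U, s, h0, hs, h1, h2, h3, h4, h5, h6⟩ := h
  obtain ⟨t, k, ht, t1, t2, t3, hk, hk'⟩ := h0.room hn
  have hne : t ≠ s := fun e => ht (e ▸ hs)
  rw [hk] at h1 h2 h3
  refine ⟨α, β * swap t s, insert t U, t, h0.B ht hs, Finset.mem_insert_self _ _, ?_, ?_, ?_, ?_, ?_, ?_⟩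
  · rw [hk']
    exact full_one_out h1
  · rw [hk']
    exact full_insR t2 hne h2 h5
  · rw [hk', ← mul_assoc]
    exact full_insR t3 hne h3 h6
  · exact len_fixed t1
  · rw [len_insR t2 hne (Or.inr rfl), h5]
  · rw [← mul_assoc, len_insR t3 hne (Or.inr rfl), h6]

lemma St.D {n a b e : ℕ} {A B C : Multiset ℕ} (h : St Ω n a A b B e C)
    (hn : n < Fintype.card Ω) : StW Ω (n + 1) (a + 1) A ((b + 1) ::ₘ B) 1 (e ::ₘ C) := by
  obtain ⟨α, β, U, s, h0, hs, h1, h2, h3, h4, h5, h6⟩ := h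
  obtain ⟨t, k, ht, t1, t2, t3, hk, hk'⟩ := h0.room hn
  have hne : t ≠ s := fun e => ht (e ▸ hs)
  rw [hk] at h1 h2 h3
  have ec : swap t s * α * (β * swap t s) = swap t s * (α * β) * (swap t s)⁻¹ := by
    rw [swap_inv]
    simp only [mul_assoc]
  refine ⟨swap t s * α, β * swap t s, insert t U, s, h0.WB ht hs hs, Finset.mem_insert_of_mem hs, ?_, ?_, ?_, ?_, ?_⟩
  · rw [hk']
    exact full_insL t1 hne h1 h4
  · rw [hk']
    exact full_insR t2 hne h2 h5
  · rw [hk', ec, full_conj]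
    exact full_one_out h3
  · rw [len_insL t1 hne (Or.inl (SameCycle.refl _ _)), h4]
  · apply len_fixed
    rw [ec]
    simp only [Equiv.Perm.mul_apply, swap_inv] at t3 ⊢
    simp [t3]

lemma St.toP {n a b e : ℕ} {A B C : Multiset ℕ} (h : St Ω n a A b B e C)
    (hn : n < Fintype.card Ω) : StP Ω (n + 1) 1 a A (b + 1) B (e + 1) C := by
  obtain ⟨α, β, U, s, h0, hs, h1, h2, h3, h4, h5, h6⟩ := h
  obtain ⟨t, k, ht, t1, t2, t3, hk, hk'⟩ := h0.room hn
  have hne : t ≠ s := fun e => ht (e ▸ hs)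
  rw [hk] at h1 h2 h3
  refine ⟨α, β * swap t s, insert t U, s, t, h0.B ht hs, Finset.mem_insert_of_mem hs,
    Finset.mem_insert_self _ _, ?_, ?_, ?_, ?_, h4, ?_, ?_, ?_, not_same_of_fixed t1 hne⟩
  · rw [hk']
    exact full_one_out h1
  · rw [hk']
    exact full_insR t2 hne h2 h5
  · rw [hk', ← mul_assoc]
    exact full_insR t3 hne h3 h6
  · exact len_fixed t1
  · rw [len_insR t2 hne (Or.inr rfl), h5]
  · rw [← mul_assoc, len_insR t3 hne (Or.inr rfl), h6]
  · simp [t1, t2]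

lemma StP.Wt {n a a' b e : ℕ} {A B C : Multiset ℕ} (h : StP Ω n a a' A b B e C)
    (hn : n < Fintype.card Ω) : StP Ω (n + 1) (a + 1) a' A 1 (b ::ₘ B) (e + 1) C := by
  obtain ⟨α, β, U, p, q, h0, hp, hq, h1, h2, h3, h4, h5, h6, h7, h8, h9⟩ := h
  obtain ⟨t, k, ht, t1, t2, t3, hk, hk'⟩ := h0.room hn
  have hne : t ≠ q := fun e => ht (e ▸ hq)
  have hnp : t ≠ p := fun e => ht (e ▸ hp)
  rw [hk] at h1 h2 h3
  have hns := not_same_of_fixed t1 hne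
  have hnp' := not_same_of_fixed t1 hnp
  refine ⟨swap t q * α, β, insert t U, p, t, h0.W ht hq, Finset.mem_insert_of_mem hp,
    Finset.mem_insert_self _ _, ?_, ?_, ?_, ?_, ?_, ?_, ?_, ?_, ?_⟩
  · rw [hk']
    exact full_insL t1 hne h1 h4
  · rw [hk']
    exact full_one_out h2
  · rw [hk', mul_assoc]
    exact full_insL t3 hne h3 h7
  · rw [len_insL t1 hne (Or.inr rfl), h4]
  · rw [len_merge_of_not hns hnp' h9, h5]
  · exact len_fixed t2
  · rw [mul_assoc, len_insL t3 hne (Or.inr rfl), h7]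
  · rw [mul_assoc, Equiv.Perm.mul_apply, h8, swap_apply_right]
  · rw [sameCycle_merge_iff hns]
    tauto

lemma StP.close {n a a' b e : ℕ} {A B C : Multiset ℕ} (h : StP Ω n a a' A b B (e + 1) C)
    (hn : n < Fintype.card Ω) :
    StW Ω (n + 1) (a' + 1) (a ::ₘ A) ((b + 1) ::ₘ B) 2 (e ::ₘ C) := by
  obtain ⟨α, β, U, p, q, h0, hp, hq, h1, h2, h3, h4, h5, h6, h7, h8, h9⟩ := h
  obtain ⟨t, k, ht, t1, t2, t3, hk, hk'⟩ := h0.room hn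
  have hne : t ≠ q := fun e => ht (e ▸ hq)
  have hnp : t ≠ p := fun e => ht (e ▸ hp)
  rw [hk] at h1 h2 h3
  have hpq : p ≠ q := by
    rintro rfl
    exact h9 (SameCycle.refl _ _)
  set c := α * β with hc
  set c0 := swap p q * c with hc0
  have c0p : c0 p = p := by simp [hc0, h8]
  have c0t : c0 t = t := by simp [hc0, t3, swap_apply_of_ne_of_ne hnp hne]
  have cc0 : c = swap p q * c0 := by simp [hc0]
  have hn1 : ¬ c0.SameCycle p q := not_same_of_fixed c0p hpq
  have hn2 : ¬ c0.SameCycle t p := not_same_of_fixed c0t hnp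
  have f1 := full_merge hn1
  have f2 := full_merge hn2
  have l1 := len_merge hn1 (Or.inr (SameCycle.refl c0 q))
  have l2 := len_merge hn2 (Or.inr (SameCycle.refl c0 p))
  rw [← cc0, len_fixed c0p] at f1 l1
  rw [len_fixed c0p, len_fixed c0t] at f2 l2
  have ec : swap t p * α * (β * swap t q) = swap t q * (swap t p * c0) * (swap t q)⁻¹ := by
    have : swap t q * (swap t p * swap p q) = swap t p := by
      ext x
      by_cases x1 : x = p
      · subst x1
        simp [swap_apply_of_ne_of_ne hne.symm hpq.symm]
      by_cases x2 : x = q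
      · subst x2
        simp [swap_apply_of_ne_of_ne hne.symm hpq.symm]
      by_cases x3 : x = t
      · subst x3
        simp [swap_apply_of_ne_of_ne hne hnp, swap_apply_of_ne_of_ne hnp hne, swap_apply_of_ne_of_ne hnp.symm hpq]
      · simp [swap_apply_of_ne_of_ne x1 x2, swap_apply_of_ne_of_ne x3 x1, swap_apply_of_ne_of_ne x3 x2]
    calc swap t p * α * (β * swap t q) = swap t p * c * swap t q := by
          simp only [hc, mul_assoc]
      _ = (swap t q * (swap t p * swap p q)) * c * swap t q := by rw [this]
      _ = _ := by simp only [hc0, mul_assoc, swap_inv]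
  refine ⟨swap t p * α, β * swap t q, insert t U, p, h0.WB ht hp hq,
    Finset.mem_insert_of_mem hp, ?_, ?_, ?_, ?_, ?_⟩
  · rw [hk']
    rw [Multiset.cons_swap] at h1
    exact full_insL t1 hnp h1 h5
  · rw [hk']
    exact full_insR t2 hne h2 h6
  · rw [hk', ec, full_conj]
    have hl : len c0 q = e := by omega
    rw [hl, h3, add_comm 1 e] at f1
    have f3 : 1 ::ₘ e ::ₘ (C + Multiset.replicate (k+1) 1) = fullCycleType c0 := by
      apply (Multiset.cons_inj_right (e+1)).1
      rw [← f1, Multiset.cons_add]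
      rw [Multiset.cons_swap (e+1) 1, Multiset.cons_swap (e+1) e]
    rw [← f3] at f2
    apply (Multiset.cons_inj_right 1).1
    apply (Multiset.cons_inj_right 1).1
    rw [f2, Multiset.replicate_succ]
    simp only [Multiset.cons_add, Multiset.add_cons]
    ext i
    simp only [Multiset.count_cons]
    ring
  · rw [len_insL t1 hnp (Or.inl (SameCycle.refl _ _)), h5]
  · rw [ec]
    have hh : (swap t q)⁻¹ p = p := by
      rw [swap_inv, swap_apply_of_ne_of_ne hnp.symm hpq]
    have : len (swap t q * (swap t p * c0) * (swap t q)⁻¹) p = len (swap t p * c0) p := by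
      unfold len
      refine Finset.card_bij (fun x _ => (swap t q)⁻¹ x) ?_ ?_ ?_
      · intro x hx
        rw [mem_cls, sameCycle_conj, hh] at hx
        exact mem_cls.2 hx
      · intro x _ y _ hxy
        exact (swap t q)⁻¹.injective hxy
      · intro x hx
        refine ⟨swap t q x, ?_, by simp⟩
        rw [mem_cls, sameCycle_conj, hh]
        simpa using mem_cls.1 hx
    rw [this, l2]

lemma StW.pow {n a e : ℕ} {A B C : Multiset ℕ} (h : StW Ω n a A B e C) (j : ℕ)
    (hn : n + j ≤ Fintype.card Ω) :
    StW Ω (n + j) (a + j) A (Multiset.replicate j 1 + B) (e + j) C := by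
  induction j with
  | zero => simpa using h
  | succ j ih =>
    have := (ih (by omega)).Ws (by omega)
    rw [Multiset.replicate_succ, Multiset.cons_add]
    exact this

lemma StP.pow {n a a' b e : ℕ} {A B C : Multiset ℕ} (h : StP Ω n a a' A b B e C) (j : ℕ)
    (hn : n + (j + 1) ≤ Fintype.card Ω) :
    StP Ω (n + (j + 1)) (a + (j + 1)) a' A 1 (b ::ₘ B + Multiset.replicate j 1) (e + (j + 1)) C := by
  induction j with
  | zero => simpa using h.Wt (by omega)
  | succ j ih =>
    have := (ih (by omega)).Wt (by omega)
    rw [Multiset.replicate_succ, Multiset.add_cons]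
    exact this

end states
section tree
variable {Ω : Type*} [Fintype Ω] [DecidableEq Ω]

lemma card_le_sum {A : Multiset ℕ} (h : ∀ x ∈ A, 1 ≤ x) : Multiset.card A ≤ A.sum := by
  have := Multiset.card_nsmul_le_sum (s := A) (a := 1) h
  simpa using this

lemma card2_le_sum {A : Multiset ℕ} (h : ∀ x ∈ A, 2 ≤ x) : 2 * Multiset.card A ≤ A.sum := by
  have := Multiset.card_nsmul_le_sum (s := A) (a := 2) h
  simp at this
  omega

lemma ge_two_of {A : Multiset ℕ} (h : ∀ x ∈ A, 1 ≤ x) (h1 : 1 ∉ A) : ∀ x ∈ A, 2 ≤ x := by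
  intro x hx
  have := h x hx
  rcases eq_or_ne x 1 with rfl | h'
  · exact absurd hx h1
  · omega

lemma tree_pick {a n : ℕ} {A B : Multiset ℕ} (hn : 2 ≤ n) (ha : 2 ≤ a)
    (hA : ∀ x ∈ A, 1 ≤ x) (hB : ∀ x ∈ B, 1 ≤ x)
    (h1 : a + A.sum = n) (h2 : 1 + B.sum = n) (hc : Multiset.card A + Multiset.card B + 1 = n) :
    ∃ b' B', B = b' ::ₘ B' ∧ (n = 2 ∨ 3 ≤ a ∨ 2 ≤ b') := by
  by_cases hb : ∃ b' ∈ B, 2 ≤ b'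
  · obtain ⟨b', hb', h⟩ := hb
    obtain ⟨B', rfl⟩ := Multiset.exists_cons_of_mem hb'
    exact ⟨b', B', rfl, Or.inr (Or.inr h)⟩
  · push Not at hb
    have hB1 : B ≠ 0 := by
      rintro rfl
      simp at h2
      omega
    obtain ⟨b', hb'⟩ := Multiset.exists_mem_of_ne_zero hB1
    obtain ⟨B', rfl⟩ := Multiset.exists_cons_of_mem hb'
    refine ⟨b', B', rfl, ?_⟩
    have : (b' ::ₘ B').sum ≤ Multiset.card (b' ::ₘ B') * 1 := by
      rw [← smul_eq_mul]
      apply Multiset.sum_le_card_nsmul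
      intro x hx
      have := hb x hx
      omega
    have hca : Multiset.card A = 0 := by omega
    rw [Multiset.card_eq_zero] at hca
    subst hca
    simp at h1
    omega

lemma tree (n : ℕ) : ∀ (a b : ℕ) (A B : Multiset ℕ), 1 ≤ a → 1 ≤ b →
    (∀ x ∈ A, 1 ≤ x) → (∀ x ∈ B, 1 ≤ x) → a + A.sum = n → b + B.sum = n →
    Multiset.card A + Multiset.card B + 1 = n → (n = 1 ∨ 2 ≤ a ∨ 2 ≤ b) → n ≤ Fintype.card Ω →
    St Ω n a A b B n 0 := by
  induction n with
  | zero => intros; omega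
  | succ n ih =>
    intro a b A B ha hb hA hB h1 h2 hc h3 hn
    rcases Nat.eq_zero_or_pos n with rfl | hn0
    · have e1 := card_le_sum hA
      have e2 := card_le_sum hB
      have : Multiset.card A = 0 := by omega
      rw [Multiset.card_eq_zero] at this
      subst this
      have : Multiset.card B = 0 := by omega
      rw [Multiset.card_eq_zero] at this
      subst this
      simp at h1 h2
      subst h1 h2
      exact St.base (by omega)
    by_cases hb1 : b = 1
    · subst hb1
      obtain ⟨b', B', rfl, hp⟩ := tree_pick (by omega) (by omega) hA hB h1 h2 hc
      obtain ⟨a, rfl⟩ : ∃ a', a = a' + 1 := ⟨a - 1, by omega⟩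
      simp only [Multiset.sum_cons, Multiset.card_cons] at h2 hc
      refine (ih a b' A B' (by omega) (hB _ (Multiset.mem_cons_self _ _)) hA
        (fun x hx => hB x (Multiset.mem_cons_of_mem hx)) (by omega) (by omega) (by omega)
        (by omega) (by omega)).Wt (by omega)
    by_cases ha1 : a = 1
    · subst ha1
      obtain ⟨b', B', rfl, hp⟩ := tree_pick (by omega) (by omega) hB hA h2 h1 (by omega)
      obtain ⟨b, rfl⟩ : ∃ a', b = a' + 1 := ⟨b - 1, by omega⟩
      simp only [Multiset.sum_cons, Multiset.card_cons] at h1 hc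
      refine (ih b' b B' B (hA _ (Multiset.mem_cons_self _ _)) (by omega)
        (fun x hx => hA x (Multiset.mem_cons_of_mem hx)) hB (by omega) (by omega) (by omega)
        (by omega) (by omega)).Bt (by omega)
    by_cases h1B : 1 ∈ B
    · obtain ⟨B', rfl⟩ := Multiset.exists_cons_of_mem h1B
      obtain ⟨a, rfl⟩ : ∃ a', a = a' + 1 := ⟨a - 1, by omega⟩
      simp only [Multiset.sum_cons, Multiset.card_cons] at h2 hc
      exact (ih a b A B' (by omega) (by omega) hA
        (fun x hx => hB x (Multiset.mem_cons_of_mem hx)) (by omega) (by omega) (by omega)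
        (by omega) (by omega)).Ws (by omega)
    by_cases h1A : 1 ∈ A
    · obtain ⟨A', rfl⟩ := Multiset.exists_cons_of_mem h1A
      obtain ⟨b, rfl⟩ : ∃ a', b = a' + 1 := ⟨b - 1, by omega⟩
      simp only [Multiset.sum_cons, Multiset.card_cons] at h1 hc
      exact (ih a b A' B (by omega) (by omega)
        (fun x hx => hA x (Multiset.mem_cons_of_mem hx)) hB (by omega) (by omega) (by omega)
        (by omega) (by omega)).Bs (by omega)
    have e1 := card2_le_sum (ge_two_of hA h1A)
    have e2 := card2_le_sum (ge_two_of hB h1B)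
    omega

end tree
section prim
variable {Ω : Type*} [Fintype Ω] [DecidableEq Ω]

lemma pow_len_mul (ω : Equiv.Perm Ω) (x : Ω) {k : ℕ} (h : len ω x ∣ k) : (ω ^ k) x = x := by
  rw [len_minimalPeriod] at h
  have := (Function.isPeriodicPt_iff_minimalPeriod_dvd (f := ω) (x := x) (n := k)).2 h
  rw [← Equiv.Perm.iterate_eq_pow]
  exact this

lemma mix {ω : Equiv.Perm Ω} {p q : ℕ} (hpq : Nat.Coprime p q) {x x' : Ω} (hx : len ω x = p)
    (hs : ω.SameCycle x x') :
    ∃ k : ℕ, (ω ^ k) x = x' ∧ ∀ z, len ω z = q → (ω ^ k) z = z := by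
  obtain ⟨j, -, hj⟩ := hs.exists_pow_eq'
  obtain ⟨k, hk1, hk2⟩ := Nat.chineseRemainder hpq j 0
  refine ⟨k, ?_, ?_⟩
  · rw [← hj, ← Equiv.Perm.iterate_eq_pow, ← Equiv.Perm.iterate_eq_pow]
    rw [← Function.iterate_mod_minimalPeriod_eq (n := k), ← Function.iterate_mod_minimalPeriod_eq (n := j)]
    rw [← len_minimalPeriod, hx, hk1]
  · intro z hz
    apply pow_len_mul
    rw [hz]
    exact (Nat.modEq_zero_iff_dvd).1 hk2

lemma dvd_of_fibre {P : Finset Ω} {b : ℕ} (f : Ω → Finset Ω) (h1 : ∀ u, u ∈ f u)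
    (h2 : ∀ u v, v ∈ f u → f v = f u) (h3 : ∀ u, (f u).card = b) (h4 : ∀ u ∈ P, f u ⊆ P) :
    b ∣ P.card := by
  rw [Finset.card_eq_sum_card_image f P]
  apply Finset.dvd_sum
  intro T hT
  obtain ⟨u, hu, rfl⟩ := Finset.mem_image.1 hT
  have : P.filter (fun v => f v = f u) = f u := by
    ext v
    simp only [Finset.mem_filter]
    constructor
    · rintro ⟨_, h⟩
      rw [← h]
      exact h1 v
    · intro h
      exact ⟨h4 u hu h, h2 u v h⟩
  rw [this, h3]

lemma block_image {G : Subgroup (Equiv.Perm Ω)} {Λ : Set Ω} (h : IsBlockOf G Λ)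
    {g : Equiv.Perm Ω} (hg : g ∈ G) : IsBlockOf G (g '' Λ) := by
  refine ⟨h.1.image _, fun k hk => ?_⟩
  have e2 : g '' (⇑(g⁻¹ * k * g) '' Λ) = k '' (g '' Λ) := by
    simp [Set.image_image]
  rcases h.2 (g⁻¹ * k * g) (G.mul_mem (G.mul_mem (G.inv_mem hg) hk) hg) with h' | h'
  · left
    rw [← e2, h']
  · right
    rw [← e2]
    exact (Set.disjoint_image_iff g.injective).2 h'

lemma block_both {G : Subgroup (Equiv.Perm Ω)} {ω : Equiv.Perm Ω} (hω : ω ∈ G) {p q : ℕ}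
    (hpq : Nat.Coprime p q) (hl : ∀ x, len ω x = p ∨ len ω x = q)
    (hp : ∀ x x', len ω x = p → len ω x' = p → ω.SameCycle x x')
    (hq : ∀ x x', len ω x = q → len ω x' = q → ω.SameCycle x x')
    {Λ : Set Ω} (h : IsBlockOf G Λ) {u v : Ω} (hu : u ∈ Λ) (hv : v ∈ Λ)
    (hup : len ω u = p) (hvq : len ω v = q) : Λ = Set.univ := by
  have key : ∀ (k : ℕ) (u v z : Ω), u ∈ Λ → v ∈ Λ → (ω ^ k) u = z → (ω ^ k) v = v → z ∈ Λ := by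
    intro k u v z hu hv h1 h2
    rcases h.2 (ω ^ k) (G.pow_mem hω k) with h' | h'
    · rw [← h', ← h1]
      exact ⟨u, hu, rfl⟩
    · exact absurd hv (Set.disjoint_left.1 h' ⟨v, hv, h2⟩)
  rw [Set.eq_univ_iff_forall]
  intro z
  rcases hl z with hz | hz
  · obtain ⟨k, k1, k2⟩ := mix hpq hup (hp u z hup hz)
    exact key k u v z hu hv k1 (k2 v hvq)
  · obtain ⟨k, k1, k2⟩ := mix hpq.symm hvq (hq v z hvq hz)
    exact key k v u z hv hu k1 (k2 u hup)

lemma prim_core {G : Subgroup (Equiv.Perm Ω)} {ω : Equiv.Perm Ω} (hω : ω ∈ G) {p q : ℕ}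
    (hpq : Nat.Coprime p q) (hl : ∀ x, len ω x = p ∨ len ω x = q)
    (hp : ∀ x x', len ω x = p → len ω x' = p → ω.SameCycle x x')
    (hq : ∀ x x', len ω x = q → len ω x' = q → ω.SameCycle x x')
    (cp : (univ.filter (fun x => len ω x = p)).card = p)
    (cq : (univ.filter (fun x => len ω x = q)).card = q)
    {g : Equiv.Perm Ω} (hg : g ∈ G) {x0 : Ω} (hx0 : len ω x0 = p) (hgx : len ω (g x0) = q) :
    SubgroupPrimitive G := by
  have tr0 : ∀ u, ∃ h ∈ G, h u = x0 := by
    intro u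
    rcases hl u with hu | hu
    · obtain ⟨j, hj⟩ := hp u x0 hu hx0
      exact ⟨ω ^ j, G.zpow_mem hω j, hj⟩
    · obtain ⟨j, hj⟩ := hq u (g x0) hu hgx
      refine ⟨g⁻¹ * ω ^ j, G.mul_mem (G.inv_mem hg) (G.zpow_mem hω j), ?_⟩
      simp [hj]
  have tr : SubgroupTransitive G := by
    intro u v
    obtain ⟨h, hh, h1⟩ := tr0 u
    obtain ⟨k, hk, k1⟩ := tr0 v
    refine ⟨k⁻¹ * h, G.mul_mem (G.inv_mem hk) hh, ?_⟩
    simp [h1, ← k1]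
  refine ⟨tr, fun Λ hΛ => ?_⟩
  by_cases hun : Λ = Set.univ
  · exact Or.inr hun
  left
  classical
  obtain ⟨s, hs⟩ := hΛ.1
  choose t htG ht using tr s
  let L : Finset Ω := univ.filter (fun x => x ∈ Λ)
  have hL : ∀ x, x ∈ L ↔ x ∈ Λ := fun x => by simp [L]
  let f : Ω → Finset Ω := fun u => L.image (t u)
  have hf : ∀ u, ((f u : Finset Ω) : Set Ω) = t u '' Λ := by
    intro u
    ext z
    simp [f, hL]
  have hf' : ∀ u v, v ∈ f u ↔ v ∈ t u '' Λ := by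
    intro u v
    rw [← hf]
    simp
  have h1 : ∀ u, u ∈ f u := by
    intro u
    rw [hf']
    exact ⟨s, hs, ht u⟩
  have h2 : ∀ u v, v ∈ f u → f v = f u := by
    intro u v hv
    rw [← Finset.coe_inj, hf, hf]
    have b := block_image hΛ (htG u)
    rcases b.2 (t v * (t u)⁻¹) (G.mul_mem (htG v) (G.inv_mem (htG u))) with h' | h'
    · rw [← h']
      simp [Set.image_image]
    · exfalso
      refine Set.disjoint_left.1 h' ?_ ((hf' u v).1 hv)
      have := (hf' v v).1 (h1 v)
      simpa [Set.image_image] using this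
  have h3 : ∀ u, (f u).card = L.card := fun u => Finset.card_image_of_injective _ (t u).injective
  have h5 : ∀ u z, z ∈ f u → len ω z = len ω u := by
    intro u z hz
    by_contra hne
    apply hun
    have : t u '' Λ = Set.univ := by
      have b := block_image hΛ (htG u)
      have z1 := (hf' u z).1 hz
      have u1 := (hf' u u).1 (h1 u)
      rcases hl u with hu | hu <;> rcases hl z with hz | hz
      · omega
      · exact block_both hω hpq hl hp hq b u1 z1 hu hz
      · exact block_both hω hpq hl hp hq b z1 u1 hz hu
      · omega
    rw [Set.eq_univ_iff_forall] at this ⊢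
    intro w
    obtain ⟨w', hw', e⟩ := this (t u w)
    rw [← (t u).injective e]
    exact hw'
  have d1 : L.card ∣ p := by
    rw [← cp]
    refine dvd_of_fibre f h1 h2 h3 ?_
    intro u hu z hz
    simp only [Finset.mem_filter, Finset.mem_univ, true_and] at hu ⊢
    rw [h5 u z hz, hu]
  have d2 : L.card ∣ q := by
    rw [← cq]
    refine dvd_of_fibre f h1 h2 h3 ?_
    intro u hu z hz
    simp only [Finset.mem_filter, Finset.mem_univ, true_and] at hu ⊢
    rw [h5 u z hz, hu]
  have := Nat.eq_one_of_dvd_coprimes hpq d1 d2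
  obtain ⟨w, hw⟩ := Finset.card_eq_one.1 this
  refine ⟨w, ?_⟩
  ext z
  rw [← hL, hw]
  simp

lemma same_of_card {ω : Equiv.Perm Ω} {p : ℕ}
    (cp : (univ.filter (fun x => len ω x = p)).card = p) :
    ∀ x x', len ω x = p → len ω x' = p → ω.SameCycle x x' := by
  intro x x' hx hx'
  have : cls ω x = univ.filter (fun x => len ω x = p) := by
    apply Finset.eq_of_subset_of_card_le
    · intro z hz
      rw [mem_cls] at hz
      simp [← len_eq hz, hx]
    · rw [cp]
      exact hx.ge
  rw [← mem_cls, this]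
  simp [hx']

lemma mem_full_len (σ : Equiv.Perm Ω) (x : Ω) : len σ x ∈ fullCycleType σ := by
  have h := count_full σ (len σ x)
  have : 0 < (univ.filter (fun z => len σ z = len σ x)).card :=
    Finset.card_pos.2 ⟨x, by simp⟩
  rw [← Multiset.count_pos]
  rw [← h] at this
  exact Nat.pos_of_mul_pos_left this

lemma cycleType_eq_filter (σ : Equiv.Perm Ω) :
    σ.cycleType = (fullCycleType σ).filter (fun i => 2 ≤ i) := by
  unfold fullCycleType
  rw [Multiset.filter_add, Multiset.filter_eq_self.2, Multiset.filter_eq_nil.2, add_zero]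
  · intro a ha
    rw [Multiset.eq_of_mem_replicate ha]
    omega
  · intro a ha
    exact two_le_of_mem_cycleType ha

lemma exists_sqrt {c : Equiv.Perm Ω} {y m : ℕ} (hy : 1 ≤ y) (hm : Odd m)
    (hd : Fintype.card Ω = 2 * y + m) (hc : fullCycleType c = y ::ₘ y ::ₘ {m}) :
    ∃ ω : Equiv.Perm Ω, ω ^ 2 = c ∧ fullCycleType ω = (2 * y) ::ₘ {m} := by
  obtain ⟨ω', h'⟩ : ∃ ω' : Equiv.Perm Ω, fullCycleType ω' = (2 * y) ::ₘ {m} := by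
    rcases eq_or_ne m 1 with rfl | hm1
    · obtain ⟨g, hg⟩ := (Equiv.Perm.exists_with_cycleType_iff Ω (m := {2 * y})).2
        ⟨by simp [hd], by simp; omega⟩
      refine ⟨g, ?_⟩
      have := g.sum_cycleType
      unfold fullCycleType
      rw [← this, hg, hd]
      simp
    · have := hm.pos
      obtain ⟨g, hg⟩ := (Equiv.Perm.exists_with_cycleType_iff Ω (m := (2 * y) ::ₘ {m})).2
        ⟨by simp [hd], by simp; omega⟩
      refine ⟨g, ?_⟩
      have := g.sum_cycleType
      unfold fullCycleType
      rw [← this, hg, hd]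
      simp
  have hsq : fullCycleType (ω' ^ 2) = fullCycleType c := by
    have hlen : ∀ x, len ω' x = 2 * y ∨ len ω' x = m := by
      intro x
      have := mem_full_len ω' x
      rw [h'] at this
      simpa using this
    have hodd := Nat.odd_iff.1 hm
    have g2 : Nat.gcd m 2 = 1 := by
      rw [Nat.coprime_two_right.2 hm]
    have hl2 : ∀ x, (len ω' x = 2 * y → len (ω' ^ 2) x = y) ∧ (len ω' x = m → len (ω' ^ 2) x = m) := by
      intro x
      rw [len_pow_two]
      constructor
      · intro h
        rw [h, Nat.gcd_eq_right (by simp)]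
        omega
      · intro h
        rw [h, g2, Nat.div_one]
    have c1 := count_full ω' (2 * y)
    have c2 := count_full ω' m
    rw [h'] at c1 c2
    have hne : 2 * y ≠ m := by omega
    simp [hne, hne.symm] at c1 c2
    refine full_ext (zero_notMem_full _) (zero_notMem_full _) ?_
    intro i
    rw [count_full]
    rw [hc]
    have e : univ.filter (fun x => len (ω' ^ 2) x = i) =
        univ.filter (fun x => len ω' x = 2 * y ∧ i = y) ∪ univ.filter (fun x => len ω' x = m ∧ i = m) := by
      ext x
      simp only [Finset.mem_union, Finset.mem_filter, Finset.mem_univ, true_and]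
      have := hl2 x
      rcases hlen x with h | h
      · have := this.1 h
        omega
      · have := this.2 h
        omega
    rw [e, Finset.card_union_of_disjoint]
    · have q1 : (univ.filter (fun x => len ω' x = 2 * y ∧ i = y)).card = if i = y then 2 * y else 0 := by
        split_ifs with hi
        · simp only [hi, and_true]
          exact c1.symm
        · simp [hi]
      have q2 : (univ.filter (fun x => len ω' x = m ∧ i = m)).card = if i = m then m else 0 := by
        split_ifs with hi
        · simp only [hi, and_true]
          exact c2.symm
        · simp [hi]
      rw [q1, q2]
      simp only [Multiset.count_cons, Multiset.count_singleton]
      split_ifs <;> subst_vars <;> ring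
    · rw [Finset.disjoint_left]
      intro x h1 h2
      simp only [Finset.mem_filter, Finset.mem_univ, true_and] at h1 h2
      omega
  have hcj : IsConj (ω' ^ 2) c := by
    rw [Equiv.Perm.isConj_iff_cycleType_eq, cycleType_eq_filter, cycleType_eq_filter, hsq]
  obtain ⟨τ, hτ⟩ := isConj_iff.1 hcj
  refine ⟨τ * ω' * τ⁻¹, ?_, by rw [full_conj, h']⟩
  rw [← hτ, conj_pow]

lemma exists_cyc (V : Finset Ω) (y : ℕ) (hV : V.card = y) (hy : 1 ≤ y) :
    ∃ γ : Equiv.Perm Ω, (∀ x, x ∉ V → γ x = x) ∧ (∀ x ∈ V, ∀ x' ∈ V, γ.SameCycle x x') ∧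
      ∀ (σ : Equiv.Perm Ω) (A : Multiset ℕ), (∀ x ∈ V, σ x = x) →
        fullCycleType σ = A + Multiset.replicate y 1 →
        fullCycleType (σ * γ) = y ::ₘ A ∧ σ * γ = γ * σ := by
  obtain ⟨γ, h1, h2⟩ := V.exists_cycleOn
  have hfix : ∀ x, x ∉ V → γ x = x := by
    intro x hx
    by_contra h
    exact hx (h2 (mem_support.2 h))
  refine ⟨γ, hfix, fun x hx x' hx' => h1.2 hx hx', ?_⟩
  intro σ A hσ hA
  have hdis : Disjoint σ γ := by
    intro x
    by_cases hx : x ∈ V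
    · exact Or.inl (hσ x hx)
    · exact Or.inr (hfix x hx)
  refine ⟨?_, hdis.commute.eq⟩
  rcases eq_or_ne y 1 with rfl | hy1
  · have : γ = 1 := by
      obtain ⟨v, rfl⟩ := Finset.card_eq_one.1 hV
      ext x
      by_cases hx : x = v
      · subst hx
        have := h1.1.mapsTo (by simp : x ∈ (({x} : Finset Ω) : Set Ω))
        simpa using this
      · simp [hfix x (by simpa using hx)]
    rw [this, mul_one, hA, Multiset.add_comm]
    simp
  · have hnt : (V : Set Ω).Nontrivial := by
      rw [Finset.nontrivial_coe]
      exact Finset.one_lt_card_iff_nontrivial.1 (by omega)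
    have hsupp : γ.support = V := by
      apply Finset.Subset.antisymm h2
      intro x hx
      exact mem_support.2 (h1.apply_ne hnt hx)
    have hcyc : γ.IsCycle := by
      obtain ⟨v, hv⟩ := Finset.card_pos.1 (by omega : 0 < V.card)
      refine ⟨v, h1.apply_ne hnt hv, ?_⟩
      intro w hw
      exact h1.2 hv (h2 (mem_support.2 hw))
    have hle := (hdis.card_support_mul)
    have hle2 := Finset.card_le_univ (σ * γ).support
    rw [hsupp, hV] at hle
    unfold fullCycleType at hA ⊢
    rw [hdis.cycleType_mul, hcyc.cycleType, hsupp, hV]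
    have e : Fintype.card Ω - σ.support.card = (Fintype.card Ω - (σ * γ).support.card) + y := by omega
    rw [e, Multiset.replicate_add, ← add_assoc] at hA
    rw [← (add_left_injective _ hA)]
    rw [← Multiset.singleton_add]
    abel

lemma final {x y m n : ℕ} {R B : Multiset ℕ} (h : StW Ω n x R B y {m}) (hy : 1 ≤ y) (hm : Odd m)
    (hn : n = y + m) (hd : Fintype.card Ω = 2 * y + m) (hym : y ≠ m) (hg : Nat.Coprime (2 * y) m) :
    ∃ α β ω : Equiv.Perm Ω, fullCycleType α = x ::ₘ y ::ₘ R ∧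
      fullCycleType β = B + Multiset.replicate y 1 ∧
      ω ^ 2 = α * β ∧ SubgroupPrimitive (Subgroup.closure {α, β, ω}) := by
  obtain ⟨α, β, U, s, ⟨hU, u1, u2, u3⟩, hs, h1, h2, h3, -, -⟩ := h
  have hdn : Fintype.card Ω - n = y := by omega
  rw [hdn] at h1 h2 h3
  have hVc : Uᶜ.card = y := by rw [Finset.card_compl]; omega
  obtain ⟨γ, g1, g2, g3⟩ := exists_cyc Uᶜ y hVc hy
  have a1 : ∀ x ∈ Uᶜ, α x = x := fun x hx => u1 x (by simpa using hx)
  have b1 : ∀ x ∈ Uᶜ, β x = x := fun x hx => u2 x (by simpa using hx)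
  obtain ⟨f1, -⟩ := g3 α _ a1 h1
  obtain ⟨-, f2⟩ := g3 β _ b1 h2
  obtain ⟨f3, -⟩ := g3 (α * β) _ (fun x hx => by simp [b1 x hx, a1 x hx]) h3
  have hmpos := hm.pos
  have hodd := Nat.odd_iff.1 hm
  obtain ⟨ω, w1, w2⟩ := exists_sqrt hy hm hd f3
  have hωc : ω ^ 2 = α * γ * β := by
    rw [w1, mul_assoc, f2, mul_assoc]
  refine ⟨α * γ, β, ω, by rw [f1, Multiset.cons_swap], h2, hωc, ?_⟩
  have hne : 2 * y ≠ m := by omega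
  have hlen : ∀ x, len ω x = 2 * y ∨ len ω x = m := by
    intro x
    have := mem_full_len ω x
    rw [w2] at this
    simpa using this
  have c1 := count_full ω (2 * y)
  have c2 := count_full ω m
  rw [w2] at c1 c2
  simp [hne, hne.symm] at c1 c2
  set G := Subgroup.closure {α * γ, β, ω} with hG
  have mα : α * γ ∈ G := Subgroup.subset_closure (by simp)
  have mβ : β ∈ G := Subgroup.subset_closure (by simp)
  have mω : ω ∈ G := Subgroup.subset_closure (by simp)
  have cross : ∃ g ∈ G, ∃ z, len ω z = 2 * y ∧ len ω (g z) = m := by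
    by_contra hcon
    push Not at hcon
    have inv1 : ∀ g ∈ G, ∀ z, len ω z = 2 * y → len ω (g z) = 2 * y := by
      intro g hg z hz
      exact (hlen (g z)).resolve_right (hcon g hg z hz)
    have inv : ∀ g ∈ G, ∀ z, len ω (g z) = 2 * y ↔ len ω z = 2 * y := by
      intro g hg z
      refine ⟨fun hz => ?_, inv1 g hg z⟩
      have := inv1 g⁻¹ (G.inv_mem hg) _ hz
      simpa using this
    have invα : ∀ z, len ω (α z) = 2 * y ↔ len ω z = 2 * y := by
      intro z
      by_cases hz : z ∈ U
      · have := inv _ mα z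
        rwa [Equiv.Perm.mul_apply, g1 z (by simpa using hz)] at this
      · rw [u1 z hz]
    have hUc := u3 (fun z => len ω z = 2 * y) invα (inv β mβ)
    by_cases hs1 : len ω s = 2 * y
    · -- `U` lies in the long cycle
      have hUS : ∀ z ∈ U, len ω z = 2 * y := fun z hz => (hUc s hs z hz).1 hs1
      have invγ : ∀ z, len ω (γ z) = 2 * y ↔ len ω z = 2 * y := by
        intro z
        by_cases hz : z ∈ U
        · rw [g1 z (by simpa using hz)]
        · have e : γ z = (ω ^ 2) z := by
            rw [w1]
            by_cases hγ : γ z ∈ U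
            · have : γ (γ z) = γ z := g1 _ (by simpa using hγ)
              rw [γ.injective this] at hγ
              exact absurd hγ hz
            · simp [u1 _ hγ, u2 _ hγ]
          rw [e]
          exact inv _ (G.pow_mem mω 2) z
      have invp : ∀ k : ℕ, ∀ z, len ω ((γ ^ k) z) = 2 * y ↔ len ω z = 2 * y := by
        intro k
        induction k with
        | zero => intro z; simp
        | succ k ih =>
          intro z
          rw [pow_succ', Equiv.Perm.mul_apply, invγ, ih]
      obtain ⟨z0, hz0⟩ := Finset.card_pos.1 (by omega : 0 < (univ.filter (fun z => len ω z = m)).card)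
      simp only [Finset.mem_filter, Finset.mem_univ, true_and] at hz0
      have hz0' : z0 ∈ Uᶜ := by
        simp only [Finset.mem_compl]
        intro hz
        have := hUS z0 hz
        omega
      have hV : Uᶜ = univ.filter (fun z => len ω z = m) := by
        ext z
        simp only [Finset.mem_filter, Finset.mem_univ, true_and]
        constructor
        · intro hz
          obtain ⟨k, -, hk⟩ := (g2 z0 hz0' z hz).exists_pow_eq'
          have := invp k z0
          rw [hk] at this
          rcases hlen z with h | h
          · have := this.1 h
            omega
          · exact h
        · intro hz
          simp only [Finset.mem_compl]
          intro hz'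
          have := hUS z hz'
          omega
      rw [hV] at hVc
      omega
    · have : U ⊆ univ.filter (fun z => len ω z = m) := by
        intro z hz
        simp only [Finset.mem_filter, Finset.mem_univ, true_and]
        refine (hlen z).resolve_left (fun h => hs1 ((hUc s hs z hz).2 h))
      have := Finset.card_le_card this
      omega
  obtain ⟨g, hg', z, hz1, hz2⟩ := cross
  exact prim_core mω hg hlen (same_of_card (by omega)) (same_of_card (by omega)) (by omega) (by omega)
    hg' hz1 hz2

end prim
section configs
variable {Ω : Type*} [Fintype Ω] [DecidableEq Ω]

lemma card_count_one {D : Multiset ℕ} (h : ∀ x ∈ D, 0 < x) :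
    2 * Multiset.card D ≤ D.sum + D.count 1 := by
  induction D using Multiset.induction_on with
  | empty => simp
  | cons a D ih =>
    have h1 := ih (fun x hx => h x (Multiset.mem_cons_of_mem hx))
    have h2 := h a (Multiset.mem_cons_self _ _)
    rw [Multiset.card_cons, Multiset.sum_cons, Multiset.count_cons]
    split_ifs <;> omega

lemma nu_add_card {D : Multiset ℕ} (h : ∀ x ∈ D, 0 < x) : nu D + Multiset.card D = D.sum := by
  unfold nu
  induction D using Multiset.induction_on with
  | empty => simp
  | cons a D ih =>
    have h1 := ih (fun x hx => h x (Multiset.mem_cons_of_mem hx))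
    have h2 := h a (Multiset.mem_cons_self _ _)
    rw [Multiset.card_cons, Multiset.sum_cons, Multiset.map_cons, Multiset.sum_cons]
    omega

lemma two_one_decomp {D : Multiset ℕ} (h : ∀ x ∈ D, 0 < x) (h2 : ∀ x ∈ D, x ≤ 2) :
    ∃ k l, D = Multiset.replicate k 2 + Multiset.replicate l 1 := by
  induction D using Multiset.induction_on with
  | empty => exact ⟨0, 0, by simp⟩
  | cons a D ih =>
    obtain ⟨k, l, e⟩ := ih (fun x hx => h x (Multiset.mem_cons_of_mem hx))
      (fun x hx => h2 x (Multiset.mem_cons_of_mem hx))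
    have p1 := h a (Multiset.mem_cons_self _ _)
    have p2 := h2 a (Multiset.mem_cons_self _ _)
    have : a = 1 ∨ a = 2 := by omega
    rcases this with rfl | rfl
    · refine ⟨k, l + 1, ?_⟩
      rw [e, Multiset.replicate_succ]
      simp
    · refine ⟨k + 1, l, ?_⟩
      rw [e, Multiset.replicate_succ]
      simp

lemma config1 {x y m w : ℕ} {R Q : Multiset ℕ} (hy : 1 ≤ y) (hxy : y < x) (hw : 2 ≤ w)
    (hR : ∀ z ∈ R, 1 ≤ z) (hQ : ∀ z ∈ Q, 1 ≤ z)
    (h1 : x + R.sum = y + m) (h2 : w + Q.sum = m + 1)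
    (hc : Multiset.card R + Multiset.card Q + 1 = m)
    (h3 : m = 1 ∨ y + 2 ≤ x ∨ 3 ≤ w) (hd : Fintype.card Ω = 2 * y + m) :
    StW Ω (y + m) x R (Multiset.replicate (y - 1) 1 + w ::ₘ Q) y {m} := by
  obtain ⟨j, rfl⟩ : ∃ j, y = j + 1 := ⟨y - 1, by omega⟩
  obtain ⟨v, rfl⟩ : ∃ v, w = v + 1 := ⟨w - 1, by omega⟩
  obtain ⟨u, rfl⟩ : ∃ u, x = u + 1 + j := ⟨x - 1 - j, by omega⟩
  have h := ((tree (Ω := Ω) m u v R Q (by omega) (by omega) hR hQ (by omega) (by omega)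
    (by omega) (by omega) (by omega)).D (by omega)).pow j (by omega)
  rw [show j + 1 + m = m + 1 + j by omega]
  rw [show 1 + j = j + 1 by omega] at h
  exact h

lemma config2 {y z : ℕ} {R : Multiset ℕ} (hy : 2 ≤ y) (hz : 2 ≤ z)
    (hR : ∀ z ∈ R, 2 ≤ z) (hd : Fintype.card Ω = 2 * y + (1 + R.sum + z)) :
    ∃ B, StW Ω (y + (1 + R.sum + z)) (y + 1) (z ::ₘ R) B y {1 + R.sum + z} ∧
      B + Multiset.replicate y 1 = Multiset.replicate (Multiset.card R + 2) 2 +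
        Multiset.replicate (2 * y + z + R.sum - 2 * Multiset.card R - 3) 1 := by
  obtain ⟨i, rfl⟩ : ∃ i, y = i + 2 := ⟨y - 2, by omega⟩
  obtain ⟨j, rfl⟩ : ∃ j, z = j + 2 := ⟨z - 2, by omega⟩
  have hRs := card2_le_sum hR
  have hR1 : ∀ z ∈ R, 1 ≤ z := fun z hz => by have := hR z hz; omega
  obtain ⟨v, Q, hv, hT⟩ : ∃ v Q, v ::ₘ Q = Multiset.replicate (Multiset.card R) 2 +
      Multiset.replicate (1 + R.sum - 2 * Multiset.card R) 1 ∧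
      St Ω (1 + R.sum) 1 R v Q (1 + R.sum) 0 := by
    rcases Nat.eq_zero_or_pos (Multiset.card R) with h0 | h0
    · rw [Multiset.card_eq_zero] at h0
      subst h0
      refine ⟨1, 0, by simp, ?_⟩
      simpa using St.base (Ω := Ω) (by omega)
    · obtain ⟨r, hr⟩ : ∃ r, Multiset.card R = r + 1 := ⟨Multiset.card R - 1, by omega⟩
      refine ⟨2, Multiset.replicate r 2 + Multiset.replicate (1 + R.sum - 2 * Multiset.card R) 1, ?_, ?_⟩
      · rw [hr, Multiset.replicate_succ]
        simp
      · apply tree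
        · omega
        · omega
        · exact hR1
        · intro a ha
          rcases Multiset.mem_add.1 ha with h | h
          · rw [Multiset.eq_of_mem_replicate h]
            omega
          · rw [Multiset.eq_of_mem_replicate h]
        · rfl
        · simp
          omega
        · simp
          omega
        · omega
        · omega
  have h := ((((hT.Wt (by omega)).toP (by omega)).pow j (by omega)).close (by omega)).pow i (by omega)
  refine ⟨Multiset.replicate i 1 + (1 + 1) ::ₘ ((1 + 1) ::ₘ v ::ₘ Q + Multiset.replicate j 1),
    ?_, ?_⟩
  · convert h using 1
    · omega
    · omega
    · rw [show 1 + (j + 1) = j + 2 by omega]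
    · omega
    · rw [← Multiset.cons_zero]
      congr 1
      rw [Nat.add_eq]
      omega
  · rw [hv]
    ext t
    simp only [Multiset.count_add, Multiset.count_cons, Multiset.count_replicate]
    split_ifs <;> omega

lemma coprime_stuff {x y d m : ℕ} (hd : Odd d) (hm : d = 2 * y + m) (hg : Nat.gcd y d = 1)
    (hx : 2 < x) (hxd : x + y ≤ d) : Odd m ∧ y ≠ m ∧ Nat.Coprime (2 * y) m := by
  have ho : Odd m := by
    rw [Nat.odd_iff] at hd ⊢
    omega
  have hgm : Nat.Coprime y m := by
    have : Nat.gcd y (2 * y + m) = Nat.gcd y m := by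
      rw [add_comm]
      simp
    rw [hm, this] at hg
    exact hg
  refine ⟨ho, ?_, Nat.Coprime.mul_left (Nat.coprime_two_left.2 ho) hgm⟩
  rintro rfl
  have : y = 1 := by simpa using hgm
  omega

lemma main_aux (d : ℕ)
    (hcard : Fintype.card Ω = d) (hd : Odd d)
    (R D₂ : Multiset ℕ) (x y : ℕ) (hP1 : IsPartitionOf d (x ::ₘ y ::ₘ R)) (hP2 : IsPartitionOf d D₂)
    (hnt2 : D₂ ≠ Multiset.replicate d 1)
    (hsum : nu (x ::ₘ y ::ₘ R) + nu D₂ = d - 1) (hord : nu D₂ ≤ nu (x ::ₘ y ::ₘ R))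
    (hxy : y < x) (hx2 : 2 < x) (hgcd : Nat.gcd y d = 1)
    (hor : y = 1 ∨ ∀ z ∈ x ::ₘ y ::ₘ R, 2 ≤ z) :
    ∃ α β ω : Equiv.Perm Ω, fullCycleType α = x ::ₘ y ::ₘ R ∧ fullCycleType β = D₂ ∧
      ω ^ 2 = α * β ∧ SubgroupPrimitive (Subgroup.closure {α, β, ω}) := by
  obtain ⟨p1, s1⟩ := hP1
  obtain ⟨p2, s2⟩ := hP2
  have n1 := nu_add_card p1
  have n2 := nu_add_card p2
  have hcc := card_count_one p2
  have hy : 1 ≤ y := p1 y (by simp)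
  have hR : ∀ z ∈ R, 1 ≤ z := fun z hz => p1 z (by simp [hz])
  have hRs := card_le_sum hR
  simp only [Multiset.sum_cons, Multiset.card_cons] at s1 n1
  rw [s2] at n2 hcc
  obtain ⟨m, hm⟩ : ∃ m, d = 2 * y + m := ⟨d - 2 * y, by omega⟩
  obtain ⟨ho, hym, hco⟩ := coprime_stuff hd hm hgcd hx2 (by omega)
  suffices h : ∃ B, StW Ω (y + m) x R B y {m} ∧ D₂ = B + Multiset.replicate y 1 by
    obtain ⟨B, hB, rfl⟩ := h
    exact final hB hy ho rfl (by omega) hym hco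
  have hcnt : 2 * y - 1 ≤ D₂.count 1 := by
    rcases hor with h | h
    · omega
    · have := card2_le_sum (A := R) (fun z hz => h z (by simp [hz]))
      omega
  have key1 : ∀ w ∈ D₂, 2 ≤ w → (m = 1 ∨ y + 2 ≤ x ∨ 3 ≤ w) →
      ∃ B, StW Ω (y + m) x R B y {m} ∧ D₂ = B + Multiset.replicate y 1 := by
    intro w hw hw2 h3
    obtain ⟨E, rfl⟩ := Multiset.exists_cons_of_mem hw
    rw [Multiset.count_cons_of_ne (by omega)] at hcnt
    obtain ⟨Q, rfl⟩ := Multiset.le_iff_exists_add.1 (Multiset.le_count_iff_replicate_le.1 hcnt)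
    simp only [Multiset.sum_cons, Multiset.card_cons, Multiset.sum_add, Multiset.card_add,
      Multiset.card_replicate, Multiset.sum_replicate, smul_eq_mul] at s2 n2
    refine ⟨_, config1 (w := w) (Q := Q) hy hxy hw2 hR (fun z hz => p2 z (by simp [hz]))
      (by omega) (by omega) (by omega) h3 (by omega), ?_⟩
    rw [show 2 * y - 1 = y - 1 + y by omega, Multiset.replicate_add]
    rw [← Multiset.singleton_add, ← Multiset.singleton_add]
    abel
  by_cases hc1 : m = 1 ∨ y + 2 ≤ x
  · have hw : ∃ w ∈ D₂, 2 ≤ w := by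
      by_contra hcon
      push Not at hcon
      apply hnt2
      have e : D₂ = Multiset.replicate (Multiset.card D₂) 1 := by
        rw [Multiset.eq_replicate]
        refine ⟨rfl, fun b hb => ?_⟩
        have := p2 b hb
        have := hcon b hb
        omega
      have e2 : D₂.sum = Multiset.card D₂ := by
        rw [e]
        simp
      rw [e, ← e2, s2]
    obtain ⟨w, hw, hw2⟩ := hw
    exact key1 w hw hw2 (by tauto)
  by_cases hw3 : ∃ w ∈ D₂, 3 ≤ w
  · obtain ⟨w, hw, hw3⟩ := hw3
    exact key1 w hw (by omega) (by tauto)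
  push Not at hw3 hc1
  obtain ⟨k, l, hkl⟩ := two_one_decomp p2 (fun z hz => by have := hw3 z hz; omega)
  have hall : ∀ z ∈ R, 2 ≤ z := by
    rcases hor with h | h
    · omega
    · intro z hz
      exact h z (by simp [hz])
  have hR0 : R ≠ 0 := by
    rintro rfl
    simp at s1
    omega
  obtain ⟨z, hz⟩ := Multiset.exists_mem_of_ne_zero hR0
  obtain ⟨R', rfl⟩ := Multiset.exists_cons_of_mem hz
  simp only [Multiset.sum_cons, Multiset.card_cons] at s1 n1 hRs
  have hR' : ∀ z ∈ R', 2 ≤ z := fun a ha => hall a (by simp [ha])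
  have hs' := card2_le_sum hR'
  have hxe : x = y + 1 := by omega
  have hme : m = 1 + R'.sum + z := by omega
  subst hxe hme
  obtain ⟨B, hB, hB'⟩ := config2 (Ω := Ω) (y := y) (z := z) (R := R') (by omega) (hall z (by simp)) hR' (by omega)
  refine ⟨B, hB, ?_⟩
  rw [hB']
  subst hkl
  simp only [Multiset.sum_add, Multiset.card_add, Multiset.card_replicate,
    Multiset.sum_replicate, smul_eq_mul] at s2 n2
  congr 2 <;> omega

end configs

end helpers

/-- If `D₁` contains parts `x > max{y,2}` with `gcd(y,d)=1`, then there exist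
`α ∈ D₁`, `β ∈ D₂` and `ω` with `ω² = αβ` such that `⟨α, β, ω⟩` is primitive. -/
theorem statement_6 {Ω : Type*} [Fintype Ω] [DecidableEq Ω] (d : ℕ)
    (hcard : Fintype.card Ω = d) (hd : Odd d) (hdpos : 0 < d)
    (D₁ D₂ : Multiset ℕ) (hP1 : IsPartitionOf d D₁) (hP2 : IsPartitionOf d D₂)
    (hnt1 : D₁ ≠ {d} ∧ D₁ ≠ Multiset.replicate d 1)
    (hnt2 : D₂ ≠ {d} ∧ D₂ ≠ Multiset.replicate d 1)
    (hsum : nu D₁ + nu D₂ = d - 1) (hord : nu D₂ ≤ nu D₁)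
    (x y : ℕ) (hx : x ∈ D₁) (hy : y ∈ D₁) (hxy : max y 2 < x)
    (hgcd : Nat.gcd y d = 1) :
    ∃ α β ω : Equiv.Perm Ω, fullCycleType α = D₁ ∧ fullCycleType β = D₂ ∧
      ω ^ 2 = α * β ∧ SubgroupPrimitive (Subgroup.closure {α, β, ω}) := by
  have hx' : y < x ∧ 2 < x := by
    rw [max_lt_iff] at hxy
    exact hxy
  obtain ⟨h1, h2⟩ := hx'
  -- replace `y` by `1` if `1` is a part
  obtain ⟨y', hy', hlt, hg', hor⟩ : ∃ y' ∈ D₁, y' < x ∧ Nat.gcd y' d = 1 ∧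
      (y' = 1 ∨ ∀ z ∈ D₁, 2 ≤ z) := by
    by_cases h : 1 ∈ D₁
    · exact ⟨1, h, by omega, by simp, Or.inl rfl⟩
    · exact ⟨y, hy, h1, hgcd, Or.inr (ge_two_of hP1.1 h)⟩
  obtain ⟨E, rfl⟩ := Multiset.exists_cons_of_mem hx
  have hyE : y' ∈ E := by
    rcases Multiset.mem_cons.1 hy' with h | h
    · omega
    · exact h
  obtain ⟨R, rfl⟩ := Multiset.exists_cons_of_mem hyE
  exact main_aux d hcard hd R D₂ x y' hP1 hP2 hnt2.2 hsum hord hlt h2 hg' hor
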